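/- arXiv:2411.06200 — 5 statements merged into one kernel-verified Lean document; each statement's English description precedes it below -/
import Mathlib

section
/- There exists an absolute constant C > 0 with the following property. Let X be a finite set, let (B_1, σ_1), …, (B_m, σ_m) be a collection of m bags with B_j ⊆ X and σ_j ∈ ℤ, let ζ ∈ (0,1], let t ≥ 1 be an integer, and let h : X → {0,1} be a classifier whose accuracy on the collection is less than 1 − ζ, i.e., |{j : h(B_j) = σ_j}| < (1 − ζ)·m. Let j_1, …, j_t be i.i.d. uniform on {1,…,m} and let X_1, …, X_t be i.i.d. uniform {0,1}-valued random variables, all independent. Then Pr[ Σ_{i=1}^t X_i·(h(B_{j_i}) − σ_{j_i}) = 0 ] ≤ C/√(ζ·t) + exp(−ζ·t/8). -/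
open Finset

lemma ea_central (n : ℕ) : (Nat.centralBinom n) ^ 2 * (2 * n + 1) ≤ 16 ^ n := by
  induction n with
  | zero => simp
  | succ n ih =>
    have h := Nat.succ_mul_centralBinom_succ n
    have h2 : (n + 1) ^ 2 * ((Nat.centralBinom (n + 1)) ^ 2 * (2 * (n + 1) + 1))
        ≤ (n + 1) ^ 2 * 16 ^ (n + 1) := by
      calc (n + 1) ^ 2 * ((Nat.centralBinom (n + 1)) ^ 2 * (2 * (n + 1) + 1))
          = ((n + 1) * Nat.centralBinom (n + 1)) ^ 2 * (2 * n + 3) := by ring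
        _ = (Nat.centralBinom n ^ 2 * (2 * n + 1)) * (4 * ((2 * n + 1) * (2 * n + 3))) := by
            rw [h]; ring
        _ ≤ 16 ^ n * (16 * (n + 1) ^ 2) := by
            apply Nat.mul_le_mul ih
            nlinarith
        _ = _ := by ring
    exact Nat.le_of_mul_le_mul_left h2 (by positivity)

lemma ea_choose (k : ℕ) : (k.choose (k / 2)) ^ 2 * (k + 1) ≤ 4 ^ k := by
  rcases Nat.even_or_odd' k with ⟨n, rfl | rfl⟩
  · have := ea_central n
    rw [Nat.centralBinom] at this
    rw [Nat.mul_div_cancel_left _ (by norm_num), pow_mul]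
    exact this
  · have h1 := ea_central (n + 1)
    have e : Nat.centralBinom (n + 1) = 2 * (2 * n + 1).choose n := by
      rw [Nat.centralBinom, show 2 * (n + 1) = (2 * n + 1) + 1 by ring, Nat.choose_succ_succ,
        Nat.choose_symm_half]
      ring
    have e2 : (2 * n + 1) / 2 = n := by omega
    rw [e] at h1
    rw [e2]
    have e3 : (16 : ℕ) ^ (n + 1) = 4 * 4 ^ (2 * n + 1) := by
      rw [show (16 : ℕ) = 4 ^ 2 by norm_num, ← pow_mul]; ring
    rw [e3] at h1
    nlinarith [sq_nonneg ((2 * n + 1).choose n)]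

lemma ea_LO {α : Type*} [Fintype α] [DecidableEq α] (d : α → ℤ) (hd : ∀ i, d i ≠ 0) (s : ℤ) :
    (univ.filter fun x : α → Bool => (∑ i, if x i then d i else 0) = s).card
      ≤ (Fintype.card α).choose (Fintype.card α / 2) := by
  classical
  set φ : (α → Bool) → Finset α := fun x => univ.filter fun i => x i = decide (0 < d i) with hφ
  have hinj : Function.Injective φ := by
    intro x y h
    funext i
    have h2 : i ∈ φ x ↔ i ∈ φ y := by rw [h]
    simp only [hφ, mem_filter, mem_univ, true_and] at h2
    cases hx : x i <;> cases hy : y i <;> cases hz : decide (0 < d i) <;> simp_all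
  rw [← card_image_of_injective _ hinj]
  apply IsAntichain.sperner
  intro a ha b hb hab hsub
  simp only [coe_image, coe_filter, mem_univ, true_and, Set.mem_image, Set.mem_ofPred_eq] at ha hb
  obtain ⟨x, hx, rfl⟩ := ha
  obtain ⟨y, hy, rfl⟩ := hb
  apply hab
  have hle : ∀ i ∈ (univ : Finset α), (if x i then d i else 0) ≤ (if y i then d i else 0) := by
    intro i _
    have h2 : i ∈ φ x → i ∈ φ y := fun h => hsub h
    simp only [hφ, mem_filter, mem_univ, true_and] at h2
    by_cases hz : 0 < d i
    · cases hx : x i <;> cases hy : y i <;> simp_all <;> omega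
    · cases hx : x i <;> cases hy : y i <;> simp_all
  have heq := (sum_eq_sum_iff_of_le hle).1 (hx.trans hy.symm)
  congr 1
  funext i
  have := heq i (mem_univ i)
  have := hd i
  cases hx : x i <;> cases hy : y i <;> simp_all

lemma ea_LO2 {α : Type*} [Fintype α] [DecidableEq α] (d : α → ℤ) :
    ((univ.filter fun x : α → Bool => (∑ i, if x i then d i else 0) = 0).card : ℝ) ^ 2
      ≤ (4 : ℝ) ^ (Fintype.card α) * (1 / ((univ.filter fun i => d i ≠ 0).card + 1 : ℝ)) := by
  classical
  set k := (univ.filter fun i => d i ≠ 0).card with hk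
  have hk' : Fintype.card {i // d i ≠ 0} = k := by rw [Fintype.card_subtype]
  set l := Fintype.card {i // ¬ d i ≠ 0} with hl
  have hkl : Fintype.card α = k + l := by
    rw [hk, hl, Fintype.card_subtype]
    exact (card_filter_add_card_filter_not (s := (univ : Finset α)) (fun i => d i ≠ 0)).symm
  have hN : (univ.filter fun x : α → Bool => (∑ i, if x i then d i else 0) = 0).card
      ≤ k.choose (k / 2) * 2 ^ l := by
    have h1 := ea_LO (fun i : {i // d i ≠ 0} => d i) (fun i => i.2) 0
    rw [hk'] at h1
    have h2 : (2 : ℕ) ^ l = (univ : Finset ({i // ¬ d i ≠ 0} → Bool)).card := by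
      simp [hl]
    rw [h2]
    refine le_trans ?_ (Nat.mul_le_mul_right _ h1)
    rw [← card_product]
    apply card_le_card_of_injOn (Equiv.piEquivPiSubtypeProd (fun i => d i ≠ 0) (fun _ => Bool))
    · intro x hx
      simp only [coe_filter, mem_univ, true_and, Set.mem_ofPred_eq] at hx
      simp only [coe_product, Set.mem_prod, coe_filter, mem_univ, true_and, Set.mem_ofPred_eq,
        coe_univ, Set.mem_univ, and_true, Equiv.piEquivPiSubtypeProd_apply]
      rw [← Fintype.sum_subtype_add_sum_subtype (fun i => d i ≠ 0)] at hx
      have h0 : (∑ i : {i // ¬ d i ≠ 0}, if x i then d i else 0) = 0 := by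
        apply sum_eq_zero
        intro i _
        have := not_not.1 i.2
        simp [this]
      rw [h0, add_zero] at hx
      exact hx
    · exact (Equiv.injective _).injOn
  have hc := ea_choose k
  have hc' : ((k.choose (k / 2) : ℕ) : ℝ) ^ 2 * (k + 1) ≤ 4 ^ k := by exact_mod_cast hc
  have hN' : ((univ.filter fun x : α → Bool => (∑ i, if x i then d i else 0) = 0).card : ℝ)
      ≤ (k.choose (k / 2) : ℕ) * 2 ^ l := by exact_mod_cast hN
  rw [hkl, mul_one_div, le_div_iff₀ (by positivity)]
  calc _ ≤ ((k.choose (k / 2) : ℕ) * 2 ^ l : ℝ) ^ 2 * (k + 1) := by gcongr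
    _ = (((k.choose (k / 2) : ℕ) : ℝ) ^ 2 * (k + 1)) * 4 ^ l := by
        rw [show (4 : ℝ) = 2 ^ 2 by norm_num, ← pow_mul]; ring
    _ ≤ 4 ^ k * 4 ^ l := by gcongr
    _ = _ := by ring

lemma ea_avg (m t : ℕ) (P : Fin m → Prop) [DecidablePred P]
    (hb : 0 < (univ.filter P).card) :
    ∑ j : Fin t → Fin m, (1 / ((univ.filter fun i => P (j i)).card + 1 : ℝ))
      ≤ (m : ℝ) ^ (t + 1) / ((univ.filter P).card * (t + 1)) := by
  set b := (univ.filter P).card with hbdef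
  set g := (univ.filter fun j => ¬ P j).card with hg
  have hbg : b + g = m := by
    have := card_filter_add_card_filter_not (s := (univ : Finset (Fin m))) P
    simpa using this
  have h1 : ∀ x : ℝ, ∑ j : Fin t → Fin m, x ^ ((univ.filter fun i => P (j i)).card)
      = (b * x + g) ^ t := by
    intro x
    have : (b * x + g : ℝ) = ∑ j : Fin m, if P j then x else 1 := by
      rw [sum_ite]; simp [hbdef, hg]
    rw [this]
    have h3 := Finset.prod_univ_sum (fun _ : Fin t => (univ : Finset (Fin m)))
      (fun _ j => if P j then x else (1 : ℝ))
    simp only [prod_const, card_univ, Fintype.card_fin, Fintype.piFinset_univ] at h3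
    rw [h3]
    apply sum_congr rfl
    intro j _
    rw [prod_ite]; simp
  have h2 : ∑ j : Fin t → Fin m, (1 / ((univ.filter fun i => P (j i)).card + 1 : ℝ))
      = ∫ x in (0:ℝ)..1, (b * x + g) ^ t := by
    simp_rw [← h1]
    rw [intervalIntegral.integral_finsetSum]
    · apply sum_congr rfl
      intro j _
      simp
    · intro j _
      exact (continuous_pow _).intervalIntegrable _ _
  have hb' : (b : ℝ) ≠ 0 := by positivity
  have h4 := intervalIntegral.integral_comp_mul_add (a := 0) (b := 1) (fun y : ℝ => y ^ t) hb' (g : ℝ)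
  rw [h2, h4, integral_pow]
  have : (b : ℝ) * 1 + g = m := by rw [← hbg]; push_cast; ring
  rw [this, smul_eq_mul, inv_mul_eq_div, div_div, mul_comm ((t : ℝ) + 1)]
  gcongr
  simp

theorem ea_main (m t : ℕ) (d : Fin m → ℤ) (ζ : ℝ) (hζ : 0 < ζ) (ht : 1 ≤ t)
    (hm : ((univ.filter fun j => d j = 0).card : ℝ) < (1 - ζ) * m) :
    ((univ.filter fun p : (Fin t → Fin m) × (Fin t → Bool) =>
        (∑ i, if p.2 i then d (p.1 i) else 0) = 0).card : ℝ) / ((m : ℝ) ^ t * 2 ^ t)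
      ≤ 1 / Real.sqrt (ζ * t) := by
  set b := (univ.filter fun j => d j ≠ 0).card with hb
  have hbg : (univ.filter fun j => d j = 0).card + b = m := by
    have := card_filter_add_card_filter_not (s := (univ : Finset (Fin m))) (fun j => d j = 0)
    simpa using this
  have hbζ : ζ * m < b := by
    have : ((univ.filter fun j => d j = 0).card : ℝ) + b = m := by exact_mod_cast hbg
    linarith
  have hbpos : (0 : ℝ) < b := lt_of_le_of_lt (by positivity) hbζ
  have hbpos' : 0 < b := by exact_mod_cast hbpos
  have hmpos : (0 : ℝ) < m := by
    have : 0 < m := by omega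
    exact_mod_cast this
  have htpos : (0 : ℝ) < t := by exact_mod_cast ht
  set q : (Fin t → Fin m) → ℕ := fun j =>
    (univ.filter fun x : Fin t → Bool => (∑ i, if x i then d (j i) else 0) = 0).card with hq
  have hcard : (univ.filter fun p : (Fin t → Fin m) × (Fin t → Bool) =>
        (∑ i, if p.2 i then d (p.1 i) else 0) = 0).card = ∑ j, q j := by
    simp only [hq, card_filter]
    rw [Fintype.sum_prod_type]
  rw [hcard]
  push_cast
  have hq2 : ∀ j, (q j : ℝ) ^ 2 ≤
      (4 : ℝ) ^ t * (1 / ((univ.filter fun i => d (j i) ≠ 0).card + 1 : ℝ)) := by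
    intro j
    have := ea_LO2 (fun i => d (j i))
    simpa only [Fintype.card_fin] using this
  have havg := ea_avg m t (fun j => d j ≠ 0) hbpos'
  have hcs := sq_sum_le_card_mul_sum_sq (s := (univ : Finset (Fin t → Fin m)))
    (f := fun j => (q j : ℝ))
  have hcu : ((univ : Finset (Fin t → Fin m)).card : ℝ) = (m : ℝ) ^ t := by simp
  rw [hcu] at hcs
  have hS : (∑ j, (q j : ℝ)) ^ 2 ≤
      (m : ℝ) ^ t * (4 ^ t * ((m : ℝ) ^ (t + 1) / (b * (t + 1)))) := by
    refine hcs.trans ?_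
    gcongr
    refine (sum_le_sum fun j _ => hq2 j).trans ?_
    rw [← mul_sum]
    gcongr
  rw [← Real.sqrt_one, ← Real.sqrt_div (by norm_num)]
  apply Real.le_sqrt_of_sq_le
  rw [div_pow, div_le_iff₀ (by positivity)]
  refine hS.trans ?_
  have h4 : (4 : ℝ) ^ t = 2 ^ t * 2 ^ t := by rw [← mul_pow]; norm_num
  have : (m : ℝ) / (b * (t + 1)) ≤ 1 / (ζ * t) := by
    rw [div_le_div_iff₀ (by positivity) (by positivity)]
    nlinarith
  calc _ = (m : ℝ) / (b * (t + 1)) * ((m : ℝ) ^ t * 2 ^ t) ^ 2 := by rw [h4]; ring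
    _ ≤ _ := by gcongr



/-- Error amplification (Lemma 4): there is an absolute constant `C > 0` such that for any
collection of bags `(B_j, σ_j)` on a finite set `X` and any classifier `h : X → {0,1}` with
accuracy less than `1 - ζ`, the probability (over i.i.d. uniform indices `j_1,…,j_t` and
i.i.d. fair coins `X_1,…,X_t`) that `∑_i X_i (h(B_{j_i}) - σ_{j_i}) = 0` is at most
`C/√(ζ t) + exp (-ζ t / 8)`. -/
theorem error_amplification :
    ∃ C : ℝ, 0 < C ∧
      ∀ (X : Type) [Fintype X] (m : ℕ) (B : Fin m → Finset X) (σ : Fin m → ℤ)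
        (ζ : ℝ), 0 < ζ → ζ ≤ 1 → ∀ t : ℕ, 1 ≤ t →
        ∀ h : X → ℕ, (∀ x, h x ≤ 1) →
        ((Finset.univ.filter fun j : Fin m => (∑ x ∈ B j, (h x : ℤ)) = σ j).card : ℝ)
          < (1 - ζ) * m →
        ((Nat.card {p : (Fin t → Fin m) × (Fin t → Bool) //
            (∑ i, if p.2 i then (∑ x ∈ B (p.1 i), (h x : ℤ)) - σ (p.1 i) else 0) = 0}) : ℝ)
          / (Fintype.card ((Fin t → Fin m) × (Fin t → Bool)) : ℝ)
          ≤ C / Real.sqrt (ζ * t) + Real.exp (-(ζ * t) / 8) := by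
  refine ⟨1, one_pos, ?_⟩
  intro X _ m B σ ζ hζ _ t ht h _ hacc
  have key := ea_main m t (fun j => (∑ x ∈ B j, (h x : ℤ)) - σ j) ζ hζ ht
    (by simpa only [sub_eq_zero] using hacc)
  rw [Nat.card_eq_fintype_card, Fintype.card_subtype]
  have hc : (Fintype.card ((Fin t → Fin m) × (Fin t → Bool)) : ℝ) = (m : ℝ) ^ t * 2 ^ t := by
    simp
  rw [hc]
  exact key.trans (le_add_of_nonneg_right (Real.exp_pos _).le)
end

section
/- There exists an absolute constant C > 0 with the following property. Let X be a finite set, let (B_1, σ_1), …, (B_m, σ_m) be a collection of m bags with B_j ⊆ X and σ_j ∈ ℤ, let ε, α ∈ (0,1), and let t be an integer with t ≥ (32/ε)·(C/α)². If a classifier h : X → {0,1} satisfies Pr[ Σ_{i=1}^t X_i·(h(B_{j_i}) − σ_{j_i}) = 0 ] ≥ α, where j_1,…,j_t are i.i.d. uniform on {1,…,m} and X_1,…,X_t are i.i.d. uniform {0,1}-valued and all are independent, then |{j ∈ {1,…,m} : h(B_j) = σ_j}| ≥ (1 − ε)·m. -/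
open Finset

theorem wts_cb (n : ℕ) : (2 * n + 1) * (Nat.centralBinom n) ^ 2 ≤ 16 ^ n := by
  induction n with
  | zero => simp
  | succ n ih =>
    have h := Nat.succ_mul_centralBinom_succ n
    have h2 : (n + 1) ^ 2 * ((2 * (n + 1) + 1) * (Nat.centralBinom (n + 1)) ^ 2)
        ≤ (n + 1) ^ 2 * 16 ^ (n + 1) := by
      calc (n + 1) ^ 2 * ((2 * (n + 1) + 1) * (Nat.centralBinom (n + 1)) ^ 2)
          = (2 * n + 3) * ((n + 1) * Nat.centralBinom (n + 1)) ^ 2 := by ring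
        _ = (4 * ((2 * n + 3) * (2 * n + 1))) * ((2 * n + 1) * Nat.centralBinom n ^ 2) := by
            rw [h]; ring
        _ ≤ (4 * (4 * (n + 1) ^ 2)) * 16 ^ n := by
            apply Nat.mul_le_mul _ ih
            nlinarith
        _ = _ := by ring
    exact Nat.le_of_mul_le_mul_left h2 (by positivity)

theorem wts_choose (k : ℕ) : (k + 1) * (k.choose (k / 2)) ^ 2 ≤ 4 ^ k := by
  obtain ⟨n, rfl | rfl⟩ := Nat.even_or_odd' k
  · have := wts_cb n
    rw [Nat.centralBinom] at this
    rw [Nat.mul_div_cancel_left _ (by norm_num), pow_mul]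
    exact this
  · have h := wts_cb (n + 1)
    have h1 : Nat.centralBinom (n + 1) = 2 * (2 * n + 1).choose n := by
      rw [Nat.centralBinom, show 2 * (n + 1) = (2 * n + 1) + 1 by ring, Nat.choose_succ_succ,
        Nat.choose_symm_half]
      ring
    rw [h1] at h
    rw [show (2 * n + 1) / 2 = n by omega]
    have : (4 : ℕ) ^ (2 * n + 1) * 4 = 16 ^ (n + 1) := by
      rw [pow_succ, pow_mul]; norm_num; ring
    nlinarith [Nat.zero_le (((2 * n + 1).choose n) ^ 2)]

theorem wts_sperner {ι : Type*} [Fintype ι] [DecidableEq ι] (w : ι → ℤ) (hw : ∀ i, w i ≠ 0) :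
    (univ.filter fun x : ι → Bool => (∑ i, if x i then w i else 0) = 0).card
      ≤ (Fintype.card ι).choose (Fintype.card ι / 2) := by
  set T : (ι → Bool) → Finset ι := fun x => univ.filter fun i => (x i = true ↔ 0 < w i) with hT
  have hinj : Function.Injective T := by
    intro x y hxy
    funext i
    have : i ∈ T x ↔ i ∈ T y := by rw [hxy]
    simp only [hT, mem_filter, mem_univ, true_and] at this
    by_cases h : 0 < w i <;> cases hx : x i <;> cases hy : y i <;> simp_all
  rw [← card_image_of_injective _ hinj]
  apply IsAntichain.sperner
  have hsum : ∀ x : ι → Bool, (∑ i ∈ T x, |w i|)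
      = (∑ i, if x i then w i else 0) + ∑ i, (if w i < 0 then -w i else 0) := by
    intro x
    rw [← sum_add_distrib, hT, sum_filter]
    apply sum_congr rfl
    intro i _
    rcases lt_or_gt_of_ne (hw i) with h | h
    · cases hx : x i <;> simp [h, h.not_gt, abs_of_neg h]
    · cases hx : x i <;> simp [h, h.not_gt, abs_of_pos h]
  intro a ha b hb hab hle
  simp only [coe_image, Set.mem_image, coe_filter, mem_univ, true_and, Set.mem_ofPred_eq] at ha hb
  obtain ⟨x, hx, rfl⟩ := ha
  obtain ⟨y, hy, rfl⟩ := hb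
  have hss : T x ⊂ T y := lt_of_le_of_ne hle hab
  obtain ⟨i, hi, hi'⟩ := exists_of_ssubset hss
  have : (∑ i ∈ T x, |w i|) < ∑ i ∈ T y, |w i| :=
    sum_lt_sum_of_subset hle hi hi' (abs_pos.mpr (hw i)) (fun _ _ _ => abs_nonneg _)
  rw [hsum, hsum, hx, hy] at this
  exact lt_irrefl _ this

theorem wts_LO {t : ℕ} (w : Fin t → ℤ) :
    (univ.filter fun x : Fin t → Bool => (∑ i, if x i then w i else 0) = 0).card ^ 2
      * ((univ.filter fun i => w i ≠ 0).card + 1) ≤ 4 ^ t := by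
  set K := (univ.filter fun i => w i ≠ 0).card with hK
  have hK' : Fintype.card {i // w i ≠ 0} = K := Fintype.card_subtype _
  have hKt : K + Fintype.card {i // ¬ w i ≠ 0} = t := by
    have := card_filter_add_card_filter_not (s := (univ : Finset (Fin t))) (fun i => w i ≠ 0)
    rw [card_univ, Fintype.card_fin] at this
    rw [Fintype.card_subtype]
    exact this
  set L := Fintype.card {i // ¬ w i ≠ 0}
  have h1 : (univ.filter fun x : Fin t → Bool => (∑ i, if x i then w i else 0) = 0).card
      ≤ K.choose (K / 2) * 2 ^ L := by
    have h2 := wts_sperner (fun i : {i // w i ≠ 0} => w i) (fun i => i.2)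
    rw [hK'] at h2
    have h3 : Fintype.card ({i // ¬ w i ≠ 0} → Bool) = 2 ^ L := by
      rw [Fintype.card_fun, Fintype.card_bool]
    rw [← h3]
    refine le_trans ?_ (Nat.mul_le_mul_right _ h2)
    rw [← card_univ, ← card_product]
    refine card_le_card_of_injOn (Equiv.piEquivPiSubtypeProd (fun i => w i ≠ 0) (fun _ => Bool))
      ?_ (Equiv.injective _).injOn
    intro x hx
    simp only [coe_filter, mem_univ, true_and, Set.mem_ofPred_eq] at hx
    simp only [coe_product, Set.mem_prod, coe_filter, mem_univ, true_and, Set.mem_ofPred_eq,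
      coe_univ, Set.mem_univ, and_true, Equiv.piEquivPiSubtypeProd_apply]
    rw [← Fintype.sum_subtype_add_sum_subtype (fun i => w i ≠ 0)] at hx
    refine Eq.trans ?_ hx
    symm
    rw [add_eq_left]
    apply sum_eq_zero
    intro i _
    have := i.2
    simp only [not_not] at this
    simp [this]
  calc _ ≤ (K.choose (K / 2) * 2 ^ L) ^ 2 * (K + 1) := by gcongr
    _ = ((K + 1) * (K.choose (K / 2)) ^ 2) * 4 ^ L := by
        rw [show (4 : ℕ) = 2 ^ 2 by norm_num, ← pow_mul]; ring
    _ ≤ 4 ^ K * 4 ^ L := by gcongr; exact wts_choose K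
    _ = 4 ^ t := by rw [← pow_add, hKt]

theorem wts_avg {t m : ℕ} (P : Fin m → Prop) [DecidablePred P] :
    ((t : ℝ) + 1) * (univ.filter P).card *
      (∑ j : Fin t → Fin m, 1 / (((univ.filter fun i => P (j i)).card : ℝ) + 1)) ≤ (m : ℝ) ^ (t + 1) := by
  set S := ∑ j : Fin t → Fin m, 1 / (((univ.filter fun i => P (j i)).card : ℝ) + 1) with hS
  have key : ∀ i : Fin (t + 1), ∑ f : Fin (t + 1) → Fin m,
      (if P (f i) then 1 / ((univ.filter fun i => P (f i)).card : ℝ) else 0)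
      = (univ.filter P).card * S := by
    intro i
    rw [← (Fin.insertNthEquiv (fun _ => Fin m) i).sum_comp, Fintype.sum_prod_type,
      card_filter, Nat.cast_sum, sum_mul]
    apply sum_congr rfl
    intro a _
    by_cases ha : P a
    · simp only [Fin.insertNthEquiv_apply, Fin.insertNth_apply_same, ha, if_true, Nat.cast_one,
        one_mul]
      rw [hS]
      apply sum_congr rfl
      intro j _
      congr 1
      rw [card_filter, card_filter, Fin.sum_univ_succAbove _ i]
      simp [ha, add_comm]
    · simp [ha]
  have h1 : ((t : ℝ) + 1) * (univ.filter P).card * S = ∑ f : Fin (t + 1) → Fin m,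
      ∑ i, (if P (f i) then 1 / ((univ.filter fun i => P (f i)).card : ℝ) else 0) := by
    rw [sum_comm, sum_congr rfl (fun i _ => key i)]
    simp; ring
  rw [h1]
  have h2 : ((m : ℝ) ^ (t + 1)) = ∑ f : Fin (t + 1) → Fin m, (1 : ℝ) := by simp
  rw [h2]
  apply sum_le_sum
  intro f _
  rw [← sum_filter, sum_const, nsmul_eq_mul]
  rw [mul_one_div]
  exact div_self_le_one _

theorem wts_final (t : ℕ) (M S ε α : ℝ) (hε : 0 < ε) (hα : 0 < α) (hM : 0 < M)
    (ht : (32 / ε) * (1 / α) ^ 2 ≤ (t : ℝ)) (hS1 : ((t : ℝ) + 1) * ε * S ≤ M)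
    (hfin : (α * (M * 2 ^ t)) ^ 2 ≤ M * (4 ^ t * S)) : False := by
  have h4 : ((2 : ℝ) ^ t) ^ 2 = 4 ^ t := by rw [← pow_mul, mul_comm, pow_mul]; norm_num
  have h4p : 0 < (4 : ℝ) ^ t := by positivity
  have h5 : α ^ 2 * M ≤ S := by
    have : (α ^ 2 * M) * (M * 4 ^ t) ≤ S * (M * 4 ^ t) := by
      calc _ = (α * (M * 2 ^ t)) ^ 2 := by rw [← h4]; ring
        _ ≤ _ := hfin
        _ = _ := by ring
    exact le_of_mul_le_mul_right this (by positivity)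
  have h6 : ((t : ℝ) + 1) * ε * α ^ 2 ≤ 1 := by
    have : (((t : ℝ) + 1) * ε * α ^ 2) * M ≤ 1 * M := by
      calc _ = ((t : ℝ) + 1) * ε * (α ^ 2 * M) := by ring
        _ ≤ ((t : ℝ) + 1) * ε * S := by gcongr
        _ ≤ _ := by linarith
    exact le_of_mul_le_mul_right this hM
  have h7 : 32 ≤ (t : ℝ) * (ε * α ^ 2) := by
    have h8 : (32 / ε) * (1 / α) ^ 2 = 32 / (ε * α ^ 2) := by field_simp
    rw [h8, div_le_iff₀ (by positivity)] at ht
    exact ht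
  have h9 : 0 < ε * α ^ 2 := by positivity
  nlinarith



/-- Weak-to-strong guarantee (analysis of algorithm `𝒜₁`): there is an absolute constant
`C > 0` such that whenever `t ≥ (32/ε)·(C/α)²`, any classifier `h : X → {0,1}` that satisfies
a random large bag (formed from `t` i.i.d. uniform bag indices and `t` i.i.d. fair coins)
with probability at least `α` must satisfy at least a `(1 - ε)`-fraction of the original
bags `(B_j, σ_j)`. -/
theorem weak_to_strong_llp :
    ∃ C : ℝ, 0 < C ∧
      ∀ (X : Type) [Fintype X] (m : ℕ) (B : Fin m → Finset X) (σ : Fin m → ℤ)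
        (ε α : ℝ), 0 < ε → ε < 1 → 0 < α → α < 1 →
        ∀ t : ℕ, (32 / ε) * (C / α) ^ 2 ≤ (t : ℝ) →
        ∀ h : X → ℕ, (∀ x, h x ≤ 1) →
        α ≤ ((Nat.card {p : (Fin t → Fin m) × (Fin t → Bool) //
            (∑ i, if p.2 i then (∑ x ∈ B (p.1 i), (h x : ℤ)) - σ (p.1 i) else 0) = 0}) : ℝ)
          / (Fintype.card ((Fin t → Fin m) × (Fin t → Bool)) : ℝ) →
        (1 - ε) * m ≤
          ((Finset.univ.filter fun j : Fin m => (∑ x ∈ B j, (h x : ℤ)) = σ j).card : ℝ) := by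

  refine ⟨1, one_pos, ?_⟩
  intro X _ m B σ ε α hε hε1 hα hα1 t ht h _ hp
  by_contra hcon
  push Not at hcon
  set w : Fin m → ℤ := fun j => (∑ x ∈ B j, (h x : ℤ)) - σ j with hw
  have hb : ε * m < ((univ.filter fun j => w j ≠ 0).card : ℝ) := by
    have h1 := card_filter_add_card_filter_not (s := (univ : Finset (Fin m)))
      (fun j => (∑ x ∈ B j, (h x : ℤ)) = σ j)
    rw [card_univ, Fintype.card_fin] at h1
    have h2 : (univ.filter fun j => w j ≠ 0)
        = univ.filter fun j => ¬ (∑ x ∈ B j, (h x : ℤ)) = σ j := by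
      apply filter_congr
      intro j _
      simp only [hw, ne_eq, sub_eq_zero]
    rw [h2]
    have h3 : (m : ℝ) = ((univ.filter fun j => (∑ x ∈ B j, (h x : ℤ)) = σ j).card : ℝ)
        + ((univ.filter fun j => ¬ (∑ x ∈ B j, (h x : ℤ)) = σ j).card : ℝ) := by
      exact_mod_cast h1.symm
    nlinarith
  have hm : 0 < (m : ℝ) := by
    rcases Nat.eq_zero_or_pos m with rfl | h0
    · simp at hb
    · exact_mod_cast h0
  set N : (Fin t → Fin m) → ℕ := fun j =>
    (univ.filter fun x : Fin t → Bool => (∑ i, if x i then w (j i) else 0) = 0).card with hN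
  set K : (Fin t → Fin m) → ℕ := fun j => (univ.filter fun i => w (j i) ≠ 0).card with hK
  have hcard : (Nat.card {p : (Fin t → Fin m) × (Fin t → Bool) //
            (∑ i, if p.2 i then (∑ x ∈ B (p.1 i), (h x : ℤ)) - σ (p.1 i) else 0) = 0})
      = ∑ j, N j := by
    rw [Nat.card_eq_fintype_card, Fintype.card_subtype, card_filter, Fintype.sum_prod_type]
    apply sum_congr rfl
    intro j _
    rw [hN]
    simp only [card_filter, hw]
  have htot : (Fintype.card ((Fin t → Fin m) × (Fin t → Bool)) : ℝ) = (m : ℝ) ^ t * 2 ^ t := by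
    simp
  rw [hcard, htot, le_div_iff₀ (by positivity)] at hp
  have hLO : ∀ j, (N j : ℝ) ^ 2 ≤ 4 ^ t * (1 / ((K j : ℝ) + 1)) := by
    intro j
    rw [mul_one_div, le_div_iff₀ (by positivity)]
    exact_mod_cast wts_LO (fun i => w (j i))
  have hCS : (∑ j, (N j : ℝ)) ^ 2 ≤ (m : ℝ) ^ t * ∑ j, (N j : ℝ) ^ 2 := by
    have := sq_sum_le_card_mul_sum_sq (s := (univ : Finset (Fin t → Fin m)))
      (f := fun j => (N j : ℝ))
    simpa using this
  have hS := wts_avg (t := t) (fun j => w j ≠ 0)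
  set S := ∑ j : Fin t → Fin m, 1 / ((K j : ℝ) + 1) with hSdef
  change ((t : ℝ) + 1) * (univ.filter fun j => w j ≠ 0).card * S ≤ _ at hS
  have hS0 : 0 ≤ S := sum_nonneg fun j _ => by positivity
  have hNS : ∑ j, (N j : ℝ) ^ 2 ≤ 4 ^ t * S := by
    rw [hSdef, mul_sum]; exact sum_le_sum fun j _ => hLO j
  have hS1 : ((t : ℝ) + 1) * ε * S ≤ (m : ℝ) ^ t := by
    have : (((t : ℝ) + 1) * ε * S) * m ≤ (m : ℝ) ^ t * m := by
      have e1 : ((t : ℝ) + 1) * ((ε * m) * S)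
          ≤ ((t : ℝ) + 1) * (((univ.filter fun j => w j ≠ 0).card : ℝ) * S) :=
        mul_le_mul_of_nonneg_left (mul_le_mul_of_nonneg_right hb.le hS0) (by positivity)
      rw [pow_succ] at hS
      linarith
    exact le_of_mul_le_mul_right this hm
  push_cast at hp
  have hfin : (α * ((m : ℝ) ^ t * 2 ^ t)) ^ 2 ≤ (m : ℝ) ^ t * (4 ^ t * S) := by
    exact (pow_le_pow_left₀ (by positivity) hp 2).trans
      (hCS.trans (mul_le_mul_of_nonneg_left hNS (by positivity)))
  exact wts_final t ((m : ℝ) ^ t) S ε α hε hα (pow_pos hm t) ht hS1 hfin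
end

section
/- There exists an absolute constant C > 0 with the following property. Let X be a finite set, let (B_1, σ_1), …, (B_m, σ_m) be a collection of m bags with B_j ⊆ X and σ_j ∈ ℤ, let ε, α ∈ (0,1), let t be an integer with t ≥ (32/ε)·(C/α)², and let s ≥ 1 be an integer. Fix a classifier h : X → {0,1} whose accuracy on the collection is less than 1 − ε, i.e., |{j : h(B_j) = σ_j}| < (1 − ε)·m. Draw s independent samples from the distribution D̄ (each sample being a large bag generated by t i.i.d. uniform indices and t independent fair coins). Then the probability that h satisfies at least α·s of the s sampled large bags is at most exp(−α·s/6). -/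
open Finset

lemma aux_sperner {ι : Type} [Fintype ι] [DecidableEq ι] (d : ι → ℤ) (hd : ∀ i, d i ≠ 0) :
    (univ.filter fun x : ι → Bool => (∑ i, if x i then d i else 0) = 0).card
      ≤ (Fintype.card ι).choose (Fintype.card ι / 2) := by
  classical
  set S := univ.filter fun x : ι → Bool => (∑ i, if x i then d i else 0) = 0 with hS
  let A : (ι → Bool) → Finset ι := fun x => univ.filter fun i => x i = decide (0 < d i)
  have key : ∀ x ∈ S, ∀ y ∈ S, A x ⊆ A y → x = y := by
    intro x hx y hy hxy
    rw [hS, mem_filter] at hx hy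
    have hle : ∀ i ∈ univ, (if x i then d i else 0) ≤ (if y i then d i else 0) := by
      intro i _
      have h1 : x i = decide (0 < d i) → y i = decide (0 < d i) := by
        intro h
        have : i ∈ A y := hxy (by simp [A, h])
        simpa [A] using this
      rcases lt_or_gt_of_ne (hd i) with h | h <;> cases hx' : x i <;> cases hy' : y i <;>
        simp_all [not_lt.mpr h.le, h.le]
    have := (Finset.sum_eq_sum_iff_of_le hle).1 (hx.2.trans hy.2.symm)
    funext i
    have h2 := this i (mem_univ _)
    have h3 := hd i
    cases hx' : x i <;> cases hy' : y i <;> rw [hx', hy'] at h2 <;> simp at h2 ⊢ <;> omega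
  have hinj : Set.InjOn A S := fun x hx y hy h => key x hx y hy (by rw [h])
  rw [← card_image_of_injOn hinj]
  apply IsAntichain.sperner
  intro a ha b hb hab hsub
  simp only [coe_image, Set.mem_image, mem_coe] at ha hb
  obtain ⟨x, hx, rfl⟩ := ha
  obtain ⟨y, hy, rfl⟩ := hb
  exact hab (by rw [key x hx y hy hsub])

lemma aux_central (k : ℕ) : k.centralBinom ^ 2 * (2 * k + 1) ≤ 16 ^ k := by
  induction k with
  | zero => simp
  | succ k ih =>
    have h := Nat.succ_mul_centralBinom_succ k
    have h2 : (k+1)^2 * ((k+1).centralBinom ^ 2 * (2 * (k+1) + 1)) ≤ (k+1)^2 * 16^(k+1) := by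
      calc (k+1)^2 * ((k+1).centralBinom ^ 2 * (2 * (k+1) + 1))
          = ((k+1) * (k+1).centralBinom)^2 * (2*k+3) := by ring
        _ = (2 * (2 * k + 1) * k.centralBinom)^2 * (2*k+3) := by rw [h]
        _ = 4 * ((2*k+1) * (2*k+3)) * (k.centralBinom ^ 2 * (2 * k + 1)) := by ring
        _ ≤ 4 * (4 * (k+1)^2) * 16 ^ k := by
          apply Nat.mul_le_mul _ ih
          nlinarith
        _ = _ := by ring
    exact Nat.le_of_mul_le_mul_left h2 (by positivity)

lemma aux_choose (n : ℕ) : (n.choose (n / 2)) ^ 2 * (n + 1) ≤ 4 ^ n := by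
  rcases Nat.even_or_odd' n with ⟨k, rfl | rfl⟩
  · have := aux_central k
    rw [Nat.mul_div_cancel_left _ (by norm_num), pow_mul]
    simpa [Nat.centralBinom] using this
  · have := aux_central (k+1)
    have h1 : (2 * k + 1) / 2 = k := by omega
    have h2 : (k+1).centralBinom = 2 * (2*k+1).choose k := by
      rw [Nat.centralBinom, show 2 * (k+1) = 2*k+1+1 by ring, Nat.choose_succ_succ,
        Nat.choose_symm_half]; ring
    rw [h1]
    rw [h2] at this
    have h3 : (4:ℕ)^(2*k+1) * 4 = 16^(k+1) := by
      rw [← pow_succ, show 2*k+1+1 = 2*(k+1) by ring, pow_mul]; norm_num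
    nlinarith [Nat.zero_le ((2*k+1).choose k ^ 2)]

/-- Littlewood–Offord bound with `1 / sqrt (K+1)`. -/
lemma aux_LO {ι : Type} [Fintype ι] [DecidableEq ι] (d : ι → ℤ) :
    ((univ.filter fun x : ι → Bool => (∑ i, if x i then d i else 0) = 0).card : ℝ)
      ≤ 2 ^ (Fintype.card ι) / √(((univ.filter fun i => d i ≠ 0).card : ℝ) + 1) := by
  classical
  set k := (univ.filter fun i => d i ≠ 0).card with hk
  have hks : Fintype.card {i // d i ≠ 0} = k := by rw [Fintype.card_subtype]
  have hN : (univ.filter fun x : ι → Bool => (∑ i, if x i then d i else 0) = 0).card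
      ≤ k.choose (k/2) * 2 ^ (Fintype.card ι - k) := by
    have h1 := aux_sperner (fun i : {i // d i ≠ 0} => d i) (fun i => i.2)
    rw [hks] at h1
    have h2 : (univ : Finset ({i // ¬ d i ≠ 0} → Bool)).card = 2 ^ (Fintype.card ι - k) := by
      rw [card_univ, Fintype.card_fun, Fintype.card_bool, Fintype.card_subtype_compl, hks]
    rw [← h2]
    refine le_trans ?_ (Nat.mul_le_mul_right _ h1)
    rw [← card_product]
    refine card_le_card_of_injOn
      (Equiv.piEquivPiSubtypeProd (fun i => d i ≠ 0) (fun _ : ι => Bool)) ?_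
      (Equiv.injective _).injOn
    intro x hx
    simp only [coe_filter, mem_univ, true_and, Set.mem_ofPred_eq] at hx
    simp only [coe_product, Set.mem_prod, coe_filter, mem_univ, true_and, Set.mem_ofPred_eq,
      coe_univ, Set.mem_univ, and_true, Equiv.piEquivPiSubtypeProd_apply]
    have h3 : ∑ i ∈ univ.filter (fun i => d i ≠ 0), (if x i then d i else 0)
        = ∑ i, (if x i then d i else 0) := by
      apply Finset.sum_filter_of_ne
      intro i _ hi h0
      simp [h0] at hi
    refine Eq.trans ?_ (h3.trans hx)
    exact (Finset.sum_subtype (p := fun i => d i ≠ 0) (univ.filter fun i => d i ≠ 0) (by simp)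
      (fun i => if x i then d i else 0)).symm
  have hkle : k ≤ Fintype.card ι := card_le_univ _
  have hc := aux_choose k
  have hc' : ((k.choose (k/2) : ℕ) : ℝ) ^ 2 * ((k:ℝ) + 1) ≤ (2 ^ k) ^ 2 := by
    rw [← pow_mul, mul_comm k 2, pow_mul]; norm_num; exact_mod_cast hc
  have hc2 : ((k.choose (k/2) : ℕ) : ℝ) * √((k:ℝ) + 1) ≤ 2 ^ k := by
    apply le_of_sq_le_sq _ (by positivity)
    rw [mul_pow, Real.sq_sqrt (by positivity)]; exact hc'
  rw [le_div_iff₀ (by positivity)]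
  calc _ ≤ ((k.choose (k/2) * 2 ^ (Fintype.card ι - k) : ℕ) : ℝ) * √((k:ℝ) + 1) := by
        gcongr
    _ = (k.choose (k/2) : ℝ) * √((k:ℝ) + 1) * 2 ^ (Fintype.card ι - k) := by push_cast; ring
    _ ≤ 2 ^ k * 2 ^ (Fintype.card ι - k) := by gcongr
    _ = _ := by rw [← pow_add]; congr 1; omega

lemma aux_inv {J : Type} [Fintype J] (N : J → Prop) [DecidablePred N] (t : ℕ) :
    (t + 1 : ℝ) * ((univ.filter N).card) *
      ∑ j : Fin t → J, 1 / (((univ.filter fun i => N (j i)).card : ℝ) + 1)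
      ≤ (Fintype.card J : ℝ) ^ (t+1) := by
  classical
  have h1 : ∑ j : Fin (t+1) → J, ∑ i, (if N (j i) then
      1 / ((univ.filter fun i => N (j i)).card : ℝ) else 0) ≤ (Fintype.card J : ℝ) ^ (t+1) := by
    calc _ ≤ ∑ j : Fin (t+1) → J, (1:ℝ) := by
          apply sum_le_sum
          intro j _
          rw [← sum_filter, sum_const, nsmul_eq_mul, mul_one_div]
          exact div_self_le_one _
      _ = _ := by simp
  refine le_trans (le_of_eq ?_) h1
  rw [sum_comm]
  have h2 : ∀ i : Fin (t+1), ∑ j : Fin (t+1) → J, (if N (j i) then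
      1 / ((univ.filter fun i => N (j i)).card : ℝ) else 0) = ((univ.filter N).card) *
      ∑ j : Fin t → J, 1 / (((univ.filter fun i => N (j i)).card : ℝ) + 1) := by
    intro i
    rw [← (Fin.insertNthEquiv (fun _ => J) i).sum_comp, Fintype.sum_prod_type]
    rw [← nsmul_eq_mul, ← sum_const, sum_filter]
    apply sum_congr rfl
    intro a _
    by_cases ha : N a
    · simp only [Fin.insertNthEquiv_apply, Fin.insertNth_apply_same, ha, if_true]
      apply sum_congr rfl
      intro j _
      congr 1
      simp only [card_filter]
      rw [Fin.sum_univ_succAbove _ i]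
      simp [ha, add_comm]
    · simp [ha]
  simp only [h2]
  simp [mul_assoc]

lemma aux_chernoff {Z : Type} [Fintype Z] [Nonempty Z] (G : Z → Prop) [DecidablePred G] (α : ℝ)
    (hα : 0 < α) (hG : ((univ.filter G).card : ℝ) ≤ α / 3 * Fintype.card Z) (s : ℕ) :
    ((Nat.card {ω : Fin s → Z // α * s ≤ ((Nat.card {ℓ : Fin s // G (ω ℓ)}) : ℝ)}) : ℝ)
      / (Fintype.card (Fin s → Z) : ℝ) ≤ Real.exp (-(α * s) / 6) := by
  classical
  have hT : (0:ℝ) < Fintype.card Z := by exact_mod_cast Fintype.card_pos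
  rw [Fintype.card_fun, Fintype.card_fin]
  push_cast
  rw [div_le_iff₀ (by positivity)]
  have he := Real.exp_one_lt_d9
  have h1 : ∑ ω : Fin s → Z, Real.exp ((univ.filter fun ℓ => G (ω ℓ)).card)
      = (∑ z : Z, if G z then Real.exp 1 else 1) ^ s := by
    rw [Fintype.sum_pow]
    apply sum_congr rfl
    intro ω _
    rw [prod_ite, prod_const, prod_const_one, mul_one, ← Real.exp_nat_mul, mul_one]
  have h2 : (∑ z : Z, if G z then Real.exp 1 else 1) ≤
      Real.exp (α * (5/6)) * Fintype.card Z := by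
    have : (∑ z : Z, if G z then Real.exp 1 else 1)
        = Fintype.card Z + (Real.exp 1 - 1) * (univ.filter G).card := by
      have : ∀ z, (if G z then Real.exp 1 else 1) = 1 + if G z then (Real.exp 1 - 1) else 0 := by
        intro z; split_ifs <;> ring
      simp only [this, sum_add_distrib, ← sum_filter]
      rw [sum_const, sum_const, card_univ, nsmul_eq_mul, nsmul_eq_mul]
      ring
    rw [this]
    have h3 := Real.add_one_le_exp (α * (5/6))
    have h5 := Real.add_one_le_exp (1:ℝ)
    have h4 : (Real.exp 1 - 1) * ((univ.filter G).card : ℝ) ≤ 2 * (α / 3 * Fintype.card Z) := by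
      gcongr
      linarith
    nlinarith [mul_pos hα hT, mul_le_mul_of_nonneg_right h3 hT.le]
  have h0 : 0 ≤ (∑ z : Z, if G z then Real.exp 1 else 1) := by positivity
  have h3 := pow_le_pow_left₀ h0 h2 s
  rw [← h1, mul_pow, ← Real.exp_nat_mul] at h3
  have h4 : ((Nat.card {ω : Fin s → Z // α * s ≤ ((Nat.card {ℓ : Fin s // G (ω ℓ)}) : ℝ)}) : ℝ)
      * Real.exp (α * s) ≤ ∑ ω : Fin s → Z, Real.exp ((univ.filter fun ℓ => G (ω ℓ)).card) := by
    simp only [Nat.card_eq_fintype_card, Fintype.card_subtype]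
    rw [← nsmul_eq_mul, ← sum_const, sum_filter]
    apply sum_le_sum
    intro ω _
    split_ifs with h
    · exact Real.exp_le_exp.2 h
    · positivity
  have h5 : Real.exp (-(α * s) / 6) = Real.exp (s * (α * (5/6))) * (Real.exp (α * s))⁻¹ := by
    rw [← Real.exp_neg, ← Real.exp_add]; congr 1; ring
  rw [h5, mul_right_comm, ← div_eq_mul_inv, le_div_iff₀ (Real.exp_pos _)]
  exact h4.trans h3

lemma aux_single {m t : ℕ} (d : Fin m → ℤ) (ε α : ℝ) (hε : 0 < ε) (hα : 0 < α)
    (ht : (32 / ε) * (1 / α) ^ 2 ≤ (t : ℝ)) (hm : 0 < m)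
    (hd : ε * m ≤ ((univ.filter fun j => d j ≠ 0).card : ℝ)) :
    ((univ.filter fun z : (Fin t → Fin m) × (Fin t → Bool) =>
      (∑ i, if z.2 i then d (z.1 i) else 0) = 0).card : ℝ) ≤
      α / 3 * Fintype.card ((Fin t → Fin m) × (Fin t → Bool)) := by
  classical
  have hm' : (0:ℝ) < m := by exact_mod_cast hm
  have h1 : ((univ.filter fun z : (Fin t → Fin m) × (Fin t → Bool) =>
      (∑ i, if z.2 i then d (z.1 i) else 0) = 0).card : ℝ) = ∑ j : Fin t → Fin m,
      ((univ.filter fun x : Fin t → Bool => (∑ i, if x i then d (j i) else 0) = 0).card : ℝ) := by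
    simp only [card_filter]
    push_cast
    rw [Fintype.sum_prod_type]
  rw [h1]
  obtain ⟨S, hS⟩ : ∃ S : ℝ, S =
    ∑ j : Fin t → Fin m, 1 / (((univ.filter fun i => d (j i) ≠ 0).card : ℝ) + 1) := ⟨_, rfl⟩
  have hinv := aux_inv (fun j => d j ≠ 0) t
  rw [← hS, Fintype.card_fin] at hinv
  have hS0 : 0 ≤ S := hS ▸ sum_nonneg fun j _ => by positivity
  -- S ≤ m^t / (ε t)
  have hSle : S * (32 / α ^ 2) ≤ (m:ℝ) ^ t := by
    have h32 : 32 / α ^ 2 ≤ ε * (t + 1) := by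
      have : 32 / α ^ 2 = ε * ((32 / ε) * (1 / α) ^ 2) := by field_simp
      rw [this]; gcongr; linarith
    have : (S * (32 / α^2)) * m ≤ (m:ℝ)^t * m := by
      calc _ ≤ S * (ε * (t+1)) * m := by gcongr
        _ = (t+1) * (ε * m) * S := by ring
        _ ≤ _ := by
          rw [← pow_succ]
          refine le_trans ?_ hinv
          gcongr
    exact le_of_mul_le_mul_right this hm'
  have hpt : ∀ y : ℝ, 0 < y → 1 / √y ≤ 3 / α * (1 / y) + α / 12 := by
    intro y hy
    have h : 1 / y = (1 / √y) ^ 2 := by rw [div_pow, Real.sq_sqrt hy.le]; simp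
    rw [h]
    set u := 1 / √y
    have : 3 / α * u ^ 2 + α / 12 - u = 3 / α * (u - α / 6) ^ 2 := by field_simp; ring
    have h2 : 0 ≤ 3 / α * (u - α / 6) ^ 2 := by positivity
    linarith
  calc _ ≤ ∑ j : Fin t → Fin m, 2 ^ t * (3 / α *
        (1 / (((univ.filter fun i => d (j i) ≠ 0).card : ℝ) + 1)) + α / 12) := by
        apply sum_le_sum
        intro j _
        refine (aux_LO (fun i => d (j i))).trans ?_
        rw [Fintype.card_fin, div_eq_mul_one_div]
        gcongr
        exact hpt _ (by positivity)
    _ = 2 ^ t * (3 / α * S + α / 12 * m ^ t) := by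
        rw [← mul_sum, sum_add_distrib, ← mul_sum, ← hS]
        simp; ring
    _ ≤ 2 ^ t * (3 / α * (α ^ 2 / 32 * m ^ t) + α / 12 * m ^ t) := by
        have : S ≤ α ^ 2 / 32 * m ^ t := by
          have := mul_le_mul_of_nonneg_left hSle (show 0 ≤ α ^ 2 / 32 by positivity)
          refine le_trans (le_of_eq ?_) this
          field_simp
        gcongr
    _ = (17 / 96) * α * (m ^ t * 2 ^ t) := by field_simp; ring
    _ ≤ _ := by
        simp only [Fintype.card_prod, Fintype.card_fun, Fintype.card_fin, Fintype.card_bool]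
        push_cast
        have : (0:ℝ) < m ^ t * 2 ^ t := by positivity
        nlinarith [mul_pos hα this]

theorem sampled_bags_fixed_classifier :
    ∃ C : ℝ, 0 < C ∧
      ∀ (X : Type) [Fintype X] (m : ℕ) (B : Fin m → Finset X) (σ : Fin m → ℤ)
        (ε α : ℝ), 0 < ε → ε < 1 → 0 < α → α < 1 →
        ∀ t : ℕ, (32 / ε) * (C / α) ^ 2 ≤ (t : ℝ) →
        ∀ s : ℕ, 1 ≤ s →
        ∀ h : X → ℕ, (∀ x, h x ≤ 1) →
        ((Finset.univ.filter fun j : Fin m => (∑ x ∈ B j, (h x : ℤ)) = σ j).card : ℝ)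
          < (1 - ε) * m →
        ((Nat.card {ω : Fin s → (Fin t → Fin m) × (Fin t → Bool) //
            α * s ≤ ((Nat.card {ℓ : Fin s //
              (∑ i, if (ω ℓ).2 i then (∑ x ∈ B ((ω ℓ).1 i), (h x : ℤ)) - σ ((ω ℓ).1 i)
                else 0) = 0}) : ℝ)}) : ℝ)
          / (Fintype.card (Fin s → (Fin t → Fin m) × (Fin t → Bool)) : ℝ)
          ≤ Real.exp (-(α * s) / 6) := by
  refine ⟨1, one_pos, ?_⟩
  intro X _ m B σ ε α hε hε1 hα hα1 t ht s hs h hh hacc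
  have hm : 0 < m := by
    rcases Nat.eq_zero_or_pos m with rfl | hm
    · simp at hacc
    · exact hm
  have : Nonempty (Fin m) := ⟨⟨0, hm⟩⟩
  have hd : ε * m ≤ ((univ.filter fun j => (∑ x ∈ B j, (h x : ℤ)) - σ j ≠ 0).card : ℝ) := by
    have := Finset.card_filter_add_card_filter_not (s := (univ : Finset (Fin m)))
      (fun j : Fin m => (∑ x ∈ B j, (h x : ℤ)) = σ j)
    rw [card_univ, Fintype.card_fin] at this
    have h2 : ((univ.filter fun j : Fin m => (∑ x ∈ B j, (h x : ℤ)) = σ j).card : ℝ) +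
      ((univ.filter fun j : Fin m => ¬ (∑ x ∈ B j, (h x : ℤ)) = σ j).card : ℝ) = m := by
      exact_mod_cast this
    simp only [ne_eq, sub_eq_zero]
    linarith
  exact aux_chernoff (fun z : (Fin t → Fin m) × (Fin t → Bool) =>
      (∑ i, if z.2 i then (∑ x ∈ B (z.1 i), (h x : ℤ)) - σ (z.1 i) else 0) = 0) α hα
    (aux_single (fun j => (∑ x ∈ B j, (h x : ℤ)) - σ j) ε α hε hα ht hm hd) s
end

section
/- Let α ∈ (1/2, 1). Identify points of the unit circle with the additive circle ℝ/2πℤ. For each midpoint φ ∈ ℝ/2πℤ, the 0-bag with midpoint φ has endpoints φ − (1−α)π/2 and φ + (1−α)π/2, and the 1-bag with midpoint φ has endpoints φ − απ/2 and φ + απ/2. Given a classifier f : ℝ/2πℤ → {0,1}, say f satisfies the 0-bag with midpoint φ iff f(φ − (1−α)π/2) = 0 and f(φ + (1−α)π/2) = 0, and f satisfies the 1-bag with midpoint φ iff f(φ − απ/2) = 1 or f(φ + απ/2) = 1. Then for every Borel probability measure μ on (ℝ/2πℤ) × {0,1} (where a point (φ, b) denotes the b-bag with midpoint φ), there exists a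 classifier f which is either the constant-0 function or a homogeneous halfspace classifier of the form φ ↦ pos(cos(φ − ψ)) for some ψ ∈ ℝ, such that the μ-measure of the set of bags satisfied by f is at least 2/3 − (1 − α)/2. -/
open MeasureTheory

namespace MilAux

/-- cosine on the circle -/
noncomputable def ccos (x : AddCircle (2 * Real.pi)) : ℝ := Real.Angle.cos x

lemma ccos_coe (x : ℝ) : ccos (x : AddCircle (2 * Real.pi)) = Real.cos x := Real.Angle.cos_coe x

lemma ccos_cont : Continuous ccos := Real.Angle.continuous_cos

lemma ccos_neg (x : AddCircle (2 * Real.pi)) : ccos (-x) = ccos x := Real.Angle.cos_neg x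

instance fact_two_pi : Fact (0 < 2 * Real.pi) := ⟨Real.two_pi_pos⟩

/-- Lower bound for the volume of a set containing the image of an interval. -/
lemma vol_ge (A : Set (AddCircle (2 * Real.pi))) (hA : MeasurableSet A) (x y : ℝ)
    (hxy : y ≤ x + 2 * Real.pi)
    (h : ∀ θ : ℝ, x < θ → θ < y → (θ : AddCircle (2 * Real.pi)) ∈ A) :
    ENNReal.ofReal (y - x) ≤ volume A := by
  have hm := AddCircle.measurePreserving_mk (2 * Real.pi) x
  rw [← hm.measure_preimage hA.nullMeasurableSet, ← Real.volume_Ioo,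
    Measure.restrict_apply (hm.measurable hA)]
  refine measure_mono fun θ hθ => ⟨h θ hθ.1 hθ.2, hθ.1, ?_⟩
  exact hθ.2.le.trans hxy

lemma vol_reflect (A : Set (AddCircle (2 * Real.pi))) (hA : MeasurableSet A) (φ : AddCircle (2 * Real.pi)) :
    volume ((fun ψ => φ - ψ) ⁻¹' A) = volume A :=
  (Measure.measurePreserving_sub_left volume φ).measure_preimage hA.nullMeasurableSet

/-- Angles at which a zero bag is satisfied. -/
def zeroSet (a : ℝ) : Set (AddCircle (2 * Real.pi)) :=
  {θ | ¬ 0 < ccos (θ - (a : AddCircle (2 * Real.pi))) ∧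
    ¬ 0 < ccos (θ + (a : AddCircle (2 * Real.pi)))}

/-- Angles at which a one bag is satisfied. -/
def oneSet (a : ℝ) : Set (AddCircle (2 * Real.pi)) :=
  {θ | 0 < ccos (θ - (a : AddCircle (2 * Real.pi))) ∨
    0 < ccos (θ + (a : AddCircle (2 * Real.pi)))}

lemma meas_pos (a : AddCircle (2 * Real.pi)) : MeasurableSet {θ | 0 < ccos (θ + a)} :=
  (isOpen_lt continuous_const (ccos_cont.comp (continuous_id.add continuous_const))).measurableSet

lemma meas_pos' (a : AddCircle (2 * Real.pi)) : MeasurableSet {θ | 0 < ccos (θ - a)} :=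
  (isOpen_lt continuous_const (ccos_cont.comp (continuous_id.sub continuous_const))).measurableSet

lemma meas_zero (a : ℝ) : MeasurableSet (zeroSet a) :=
  (meas_pos' a).compl.inter (meas_pos a).compl

lemma meas_one (a : ℝ) : MeasurableSet (oneSet a) :=
  (meas_pos' a).union (meas_pos a)

lemma vol_zero (a : ℝ) (ha : 0 ≤ a) : ENNReal.ofReal (Real.pi - 2 * a) ≤ volume (zeroSet a) := by
  have hp := Real.pi_pos
  have := vol_ge (zeroSet a) (meas_zero a) (Real.pi / 2 + a) (3 * Real.pi / 2 - a)
    (by linarith) (by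
      intro θ h1 h2
      refine ⟨?_, ?_⟩
      · rw [← AddCircle.coe_sub, ccos_coe, not_lt]
        exact Real.cos_nonpos_of_pi_div_two_le_of_le (by linarith) (by linarith)
      · rw [← AddCircle.coe_add, ccos_coe, not_lt]
        exact Real.cos_nonpos_of_pi_div_two_le_of_le (by linarith) (by linarith))
  convert this using 2
  ring

lemma vol_one (a : ℝ) (ha : 0 ≤ a) (ha' : a < Real.pi / 2) :
    ENNReal.ofReal (Real.pi + 2 * a) ≤ volume (oneSet a) := by
  have hp := Real.pi_pos
  have := vol_ge (oneSet a) (meas_one a) (-(Real.pi / 2) - a) (Real.pi / 2 + a)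
    (by linarith) (by
      intro θ h1 h2
      rcases le_total 0 θ with h | h
      · left
        rw [← AddCircle.coe_sub, ccos_coe]
        exact Real.cos_pos_of_mem_Ioo ⟨by linarith, by linarith⟩
      · right
        rw [← AddCircle.coe_add, ccos_coe]
        exact Real.cos_pos_of_mem_Ioo ⟨by linarith, by linarith⟩)
  convert this using 2
  ring

/-- Satisfaction relation between midpoint difference and bags. -/
def sat (a b : ℝ) : Set (AddCircle (2 * Real.pi) × (AddCircle (2 * Real.pi) × Bool)) :=
  {q | (q.2.2 = false ∧ q.2.1 - q.1 ∈ zeroSet a) ∨ (q.2.2 = true ∧ q.2.1 - q.1 ∈ oneSet b)}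

lemma meas_sat (a b : ℝ) : MeasurableSet (sat a b) := by
  have h1 : Measurable fun q : AddCircle (2 * Real.pi) × (AddCircle (2 * Real.pi) × Bool) =>
      q.2.1 - q.1 := by fun_prop
  have h2 : Measurable fun q : AddCircle (2 * Real.pi) × (AddCircle (2 * Real.pi) × Bool) =>
      q.2.2 := by fun_prop
  exact ((h2 (measurableSet_singleton false)).inter (h1 (meas_zero a))).union
    ((h2 (measurableSet_singleton true)).inter (h1 (meas_one b)))

lemma avg (a b : ℝ) (ha : 0 ≤ a) (hb : 0 ≤ b) (hb' : b < Real.pi / 2)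
    (μ : Measure (AddCircle (2 * Real.pi) × Bool)) [IsProbabilityMeasure μ] :
    ENNReal.ofReal (Real.pi - 2 * a) * μ {p | p.2 = false} +
      ENNReal.ofReal (Real.pi + 2 * b) * μ {p | p.2 = false}ᶜ ≤
    ∫⁻ ψ : AddCircle (2 * Real.pi), μ (Prod.mk ψ ⁻¹' sat a b) := by
  have hF : MeasurableSet {p : AddCircle (2 * Real.pi) × Bool | p.2 = false} :=
    measurable_snd (measurableSet_singleton false)
  rw [← Measure.prod_apply (meas_sat a b), Measure.prod_apply_symm (meas_sat a b),
    ← lintegral_add_compl _ hF]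
  refine add_le_add ?_ ?_
  · rw [← setLIntegral_const]
    refine setLIntegral_mono' hF fun p hp => ?_
    refine (vol_zero a ha).trans ?_
    rw [← vol_reflect _ (meas_zero a) p.1]
    exact measure_mono fun ψ hψ => Or.inl ⟨hp, hψ⟩
  · rw [← setLIntegral_const]
    refine setLIntegral_mono' hF.compl fun p hp => ?_
    refine (vol_one b hb hb').trans ?_
    rw [← vol_reflect _ (meas_one b) p.1]
    refine measure_mono fun ψ hψ => Or.inr ⟨?_, hψ⟩
    simpa using hp

end MilAux

open MilAux in
/-- Existence of a weak classifier for the continuous MIL construction on the circle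
`ℝ/2πℤ`: for every Borel probability measure `μ` on bags (a bag is a midpoint `φ` together
with a label `b : Bool`; the 0-bag has endpoints `φ ± (1-α)π/2` and the 1-bag has endpoints
`φ ± απ/2`), there is a classifier `f` — either the constant-0 classifier or a homogeneous
halfspace `φ ↦ pos (cos (φ - ψ))` — whose satisfied bags have `μ`-measure at least
`2/3 - (1-α)/2`. -/
theorem mil_weak_classifier_exists (α : ℝ) (hα₁ : 1 / 2 < α) (hα₂ : α < 1)
    (μ : Measure (AddCircle (2 * Real.pi) × Bool)) [IsProbabilityMeasure μ] :
    ∃ f : AddCircle (2 * Real.pi) → Bool,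
      ((∀ φ, f φ = false) ∨
        ∃ ψ : ℝ, ∀ φ : ℝ, f (φ : AddCircle (2 * Real.pi)) =
          decide (0 < Real.cos (φ - ψ))) ∧
      ENNReal.ofReal (2 / 3 - (1 - α) / 2) ≤
        μ {p : AddCircle (2 * Real.pi) × Bool |
          (p.2 = false ∧
            f (p.1 - (((1 - α) * Real.pi / 2 : ℝ) : AddCircle (2 * Real.pi))) = false ∧
            f (p.1 + (((1 - α) * Real.pi / 2 : ℝ) : AddCircle (2 * Real.pi))) = false) ∨
          (p.2 = true ∧
            (f (p.1 - ((α * Real.pi / 2 : ℝ) : AddCircle (2 * Real.pi))) = true ∨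
             f (p.1 + ((α * Real.pi / 2 : ℝ) : AddCircle (2 * Real.pi))) = true))} := by
  classical
  have hp := Real.pi_pos
  have hF : MeasurableSet {p : AddCircle (2 * Real.pi) × Bool | p.2 = false} :=
    measurable_snd (measurableSet_singleton false)
  by_cases h0 : ENNReal.ofReal (2 / 3 - (1 - α) / 2) ≤ μ {p | p.2 = false}
  · refine ⟨fun _ => false, Or.inl fun _ => rfl, h0.trans (measure_mono fun p hp => ?_)⟩
    exact Or.inl ⟨hp, rfl, rfl⟩
  by_cases h1 : ∃ ψ : AddCircle (2 * Real.pi), ENNReal.ofReal (2 / 3 - (1 - α) / 2) ≤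
      μ (Prod.mk ψ ⁻¹' sat ((1 - α) * Real.pi / 2) (α * Real.pi / 2))
  · obtain ⟨ψ, hψ⟩ := h1
    obtain ⟨r, rfl⟩ := QuotientAddGroup.mk_surjective ψ
    refine ⟨fun φ => decide (0 < ccos (φ - (r : AddCircle (2 * Real.pi)))),
      Or.inr ⟨r, fun φ => ?_⟩, hψ.trans (measure_mono fun p hp => ?_)⟩
    · simp only [← AddCircle.coe_sub, ccos_coe]
    · simp only [Set.mem_ofPred_eq, decide_eq_false_iff_not, decide_eq_true_eq]
      simp only [sub_right_comm _ _ (r : AddCircle (2 * Real.pi)),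
        add_sub_right_comm _ _ (r : AddCircle (2 * Real.pi))]
      exact hp
  exfalso
  push Not at h0 h1
  have key := avg ((1 - α) * Real.pi / 2) (α * Real.pi / 2) (by nlinarith) (by nlinarith)
    (by nlinarith) μ
  have hle := key.trans (lintegral_mono fun ψ => (h1 ψ).le)
  rw [lintegral_const, AddCircle.measure_univ, prob_compl_eq_one_sub hF] at hle
  set m := μ {p | p.2 = false} with hm
  have hmt : m ≠ ⊤ := measure_ne_top _ _
  have hm1 : m ≤ 1 := prob_le_one
  obtain ⟨x, hx⟩ : ∃ x : ℝ, x = m.toReal := ⟨_, rfl⟩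
  have hx0 : 0 ≤ x := hx ▸ ENNReal.toReal_nonneg
  have hmx : m = ENNReal.ofReal x := by rw [hx, ENNReal.ofReal_toReal hmt]
  have hx1 : x ≤ 1 := by
    rw [hx]; exact ENNReal.toReal_le_of_le_ofReal zero_le_one (by simpa using hm1)
  rw [hmx] at h0 hle
  have hxc : x < 2 / 3 - (1 - α) / 2 := (ENNReal.ofReal_lt_ofReal_iff (by linarith)).1 h0
  rw [← ENNReal.ofReal_one, ← ENNReal.ofReal_sub _ hx0, ← ENNReal.ofReal_mul (by nlinarith),
    ← ENNReal.ofReal_mul (by nlinarith), ← ENNReal.ofReal_mul (by linarith),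
    ← ENNReal.ofReal_add (mul_nonneg (by nlinarith) hx0)
      (mul_nonneg (by nlinarith) (by linarith)),
    ENNReal.ofReal_le_ofReal_iff (mul_nonneg (by linarith) (by linarith))] at hle
  have h2 : Real.pi * (α * x + (1 + α) * (1 - x)) ≤
      Real.pi * ((2 / 3 - (1 - α) / 2) * 2) := by linarith
  have h3 := le_of_mul_le_mul_left h2 hp
  linarith
end

section
/- Let α ∈ (1/2, 1), let λ denote the normalized Haar probability measure on the additive circle ℝ/2πℤ, and let f : ℝ/2πℤ → {0,1} be Borel measurable. Then (1/2)·[ λ{ φ : f(φ − (1−α)π/2) = 0 and f(φ + (1−α)π/2) = 0 } + λ{ φ : f(φ − απ/2) = 1 or f(φ + απ/2) = 1 } ] ≤ 3/4. In words: under the uniform distribution on bag midpoints with equal mass on 0-bags and 1-bags, no classifier of the points of the circle satisfies more than a 3/4 fraction of the MIL bags. -/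
open MeasureTheory

/-- No strong classifier for the continuous MIL construction on the circle `ℝ/2πℤ`: for any
measurable classifier `f`, under the uniform distribution on bag midpoints (with equal mass
on 0-bags, whose endpoints are `φ ± (1-α)π/2`, and 1-bags, whose endpoints are `φ ± απ/2`),
the fraction of satisfied bags is at most `3/4`. Here `λ` is the normalized Haar probability
measure on `ℝ/2πℤ`. -/
theorem mil_no_strong_classifier (α : ℝ) (hα₁ : 1 / 2 < α) (hα₂ : α < 1)
    [Fact (0 < 2 * Real.pi)]
    (f : AddCircle (2 * Real.pi) → Bool) (hf : Measurable f) :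
    (1 / 2 : ℝ) *
      (((AddCircle.haarAddCircle : Measure (AddCircle (2 * Real.pi)))
          {φ | f (φ - (((1 - α) * Real.pi / 2 : ℝ) : AddCircle (2 * Real.pi))) = false ∧
               f (φ + (((1 - α) * Real.pi / 2 : ℝ) : AddCircle (2 * Real.pi))) = false}).toReal +
       ((AddCircle.haarAddCircle : Measure (AddCircle (2 * Real.pi)))
          {φ | f (φ - ((α * Real.pi / 2 : ℝ) : AddCircle (2 * Real.pi))) = true ∨
               f (φ + ((α * Real.pi / 2 : ℝ) : AddCircle (2 * Real.pi))) = true}).toReal)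
      ≤ 3 / 4 := by
  set μ : Measure (AddCircle (2 * Real.pi)) := AddCircle.haarAddCircle with hμ
  set a : (AddCircle (2 * Real.pi)) := (((1 - α) * Real.pi / 2 : ℝ) : (AddCircle (2 * Real.pi))) with ha
  set b : (AddCircle (2 * Real.pi)) := ((α * Real.pi / 2 : ℝ) : (AddCircle (2 * Real.pi))) with hb
  set A : Set (AddCircle (2 * Real.pi)) := {φ | f (φ - a) = false ∧ f (φ + a) = false} with hA
  set B : Set (AddCircle (2 * Real.pi)) := {φ | f (φ - b) = true ∨ f (φ + b) = true} with hB
  have hAm : MeasurableSet A := by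
    have h1 : Measurable fun φ : (AddCircle (2 * Real.pi)) => f (φ - a) := hf.comp (measurable_id.sub_const a)
    have h2 : Measurable fun φ : (AddCircle (2 * Real.pi)) => f (φ + a) := hf.comp (measurable_id.add_const a)
    exact (h1 (measurableSet_singleton false)).inter (h2 (measurableSet_singleton false))
  have hBm : MeasurableSet B := by
    have h1 : Measurable fun φ : (AddCircle (2 * Real.pi)) => f (φ - b) := hf.comp (measurable_id.sub_const b)
    have h2 : Measurable fun φ : (AddCircle (2 * Real.pi)) => f (φ + b) := hf.comp (measurable_id.add_const b)
    exact (h1 (measurableSet_singleton true)).union (h2 (measurableSet_singleton true))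
  set q : (AddCircle (2 * Real.pi)) := a + b with hq
  have hcov : (Set.univ : Set (AddCircle (2 * Real.pi))) ⊆ (Aᶜ ∪ (fun x => x + (q + q)) ⁻¹' Aᶜ) ∪
      ((fun x => x + q) ⁻¹' Bᶜ ∪ (fun x => x + (q + q + q)) ⁻¹' Bᶜ) := by
    intro x _
    by_contra hx
    simp only [Set.mem_union, Set.mem_preimage, Set.mem_compl_iff, not_or, not_not] at hx
    obtain ⟨⟨⟨h1, h2⟩, h3, h5⟩, h6, h7⟩ := hx
    have e1 : x + q - b = x + a := by rw [hq]; abel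
    have e2 : x + q + b = x + (q + q) - a := by rw [hq]; abel
    change f (x + q - b) = true ∨ f (x + q + b) = true at h6
    rw [e1, e2, h2, h3] at h6
    simp at h6
  have key := measureReal_mono (μ := μ) hcov
  have k1 := measureReal_union_le (μ := μ) (Aᶜ ∪ (fun x => x + (q + q)) ⁻¹' Aᶜ)
      ((fun x => x + q) ⁻¹' Bᶜ ∪ (fun x => x + (q + q + q)) ⁻¹' Bᶜ)
  have k2 := measureReal_union_le (μ := μ) Aᶜ ((fun x => x + (q + q)) ⁻¹' Aᶜ)
  have k3 := measureReal_union_le (μ := μ) ((fun x => x + q) ⁻¹' Bᶜ)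
    ((fun x => x + (q + q + q)) ⁻¹' Bᶜ)
  have t (c : (AddCircle (2 * Real.pi))) (S : Set (AddCircle (2 * Real.pi))) : μ.real ((fun x => x + c) ⁻¹' S) = μ.real S := by
    simp only [measureReal_def, measure_preimage_add_right]
  simp only [t, probReal_compl_eq_one_sub hAm, probReal_compl_eq_one_sub hBm, probReal_univ]
    at key k1 k2 k3
  change 1 / 2 * (μ.real A + μ.real B) ≤ 3 / 4
  linarith
end
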